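/- arXiv:1912.05919 — 4 statements merged into one kernel-verified Lean document; each statement's English description precedes it below -/
import Mathlib

section
/- Let p be a prime with p ≥ 7 and p ≡ 3 (mod 4). Then: (i) there exist nonzero squares a, b ∈ ZMod p such that a + b is a nonzero square; and (ii) there exist nonzero squares a, b ∈ ZMod p such that a + b is nonzero and is not a square. (In the quotient hyperfield W = F_p/(F_p^×)², together with the fact that a sum of two nonzero squares is nonzero, this says [1] ⊞ [1] = {[1], [−1]}, i.e., F_p/(F_p^×)² realizes the addition table of the weak hyperfield of signs on the class [1].) -/
/-!
In characteristic other than two, the point `((1 - t²) / (1 + t²), 2t / (1 + t²))` of the circle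
`x² + y² = 1` lies off the axes unless `t ^ 5 = t`. So in a field with more than five elements `1`,
and hence every nonzero square, is a sum of two nonzero squares. In a finite field every non-square
is also a sum of two squares, by counting, and neither summand can vanish.
-/

open Polynomial
open scoped Cardinal

section Field

variable {F : Type*} [Field F]

theorem exists_pow_ne_self_of_lt_card {n : ℕ} (hn : 1 < n) (hF : n < #F) :
    ∃ t : F, t ^ n ≠ t := by
  obtain ⟨t, ht⟩ := exists_eval_ne_zero_of_natDegree_lt_card (X ^ n - X : F[X])
    (FiniteField.X_pow_card_sub_X_ne_zero F hn)
    (by rwa [FiniteField.X_pow_card_sub_X_natDegree_eq F hn])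
  exact ⟨t, by simpa [sub_eq_zero] using ht⟩

theorem exists_ne_zero_sq_add_sq_eq_one (hF : 5 < #F) :
    ∃ x y : F, x ≠ 0 ∧ y ≠ 0 ∧ x ^ 2 + y ^ 2 = 1 := by
  obtain ⟨t, ht⟩ := exists_pow_ne_self_of_lt_card (F := F) (n := 5) (by norm_num) hF
  have ht_prod : t * (1 - t ^ 2) * (1 + t ^ 2) ≠ 0 := fun h ↦ ht (by linear_combination -h)
  obtain ⟨⟨ht_zero, ht_sub⟩, ht_add⟩ : (t ≠ 0 ∧ 1 - t ^ 2 ≠ 0) ∧ 1 + t ^ 2 ≠ 0 := by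
    simpa only [mul_ne_zero_iff] using ht_prod
  by_cases h_two : (2 : F) = 0
  · -- The circle degenerates to the double line `(x + y) ^ 2 = 1`.
    have h_one_add : 1 + t ≠ 0 := fun h ↦ ht_sub (by linear_combination (1 - t) * h)
    exact ⟨t, 1 + t, ht_zero, h_one_add, by linear_combination (t ^ 2 + t) * h_two⟩
  · refine ⟨(1 - t ^ 2) / (1 + t ^ 2), 2 * t / (1 + t ^ 2), div_ne_zero ht_sub ht_add,
      div_ne_zero (mul_ne_zero h_two ht_zero) ht_add, ?_⟩
    field_simp
    ring

end Field

section FiniteField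

variable {F : Type*} [Field F] [Finite F]

theorem exists_sq_add_sq_eq (c : F) : ∃ x y : F, x ^ 2 + y ^ 2 = c := by
  have := Fintype.ofFinite F
  by_cases h_char : ringChar F = 2
  · obtain ⟨x, hx⟩ := FiniteField.isSquare_of_char_two h_char c
    exact ⟨x, 0, by simp [hx, sq]⟩
  · obtain ⟨x, y, hxy⟩ := FiniteField.exists_root_sum_quadratic
      (degree_X_pow 2) (degree_X_pow_sub_C two_pos c) (FiniteField.odd_card_of_char_ne_two h_char)
    exact ⟨x, y, by simpa [← add_sub_assoc, sub_eq_zero] using hxy⟩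

theorem exists_ne_zero_sq_add_sq_eq (hF : 5 < Nat.card F) {c : F} (hc : c ≠ 0) :
    ∃ x y : F, x ≠ 0 ∧ y ≠ 0 ∧ x ^ 2 + y ^ 2 = c := by
  by_cases hc_sq : IsSquare c
  · obtain ⟨w, rfl⟩ := hc_sq
    have hw : w ≠ 0 := left_ne_zero_of_mul hc
    obtain ⟨x, y, hx, hy, hxy⟩ :=
      exists_ne_zero_sq_add_sq_eq_one (F := F) (by rw [← Nat.cast_card]; exact_mod_cast hF)
    exact ⟨w * x, w * y, mul_ne_zero hw hx, mul_ne_zero hw hy,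
      by linear_combination w ^ 2 * hxy⟩
  · obtain ⟨x, y, rfl⟩ := exists_sq_add_sq_eq c
    have hx : x ≠ 0 := by
      rintro rfl
      exact hc_sq ⟨y, by ring⟩
    have hy : y ≠ 0 := by
      rintro rfl
      exact hc_sq ⟨x, by ring⟩
    exact ⟨x, y, hx, hy, rfl⟩

theorem sum_of_nonzero_squares_both_classes_general
    (hF_char : ringChar F ≠ 2) (hF : 5 < Nat.card F) :
    (∃ a b : F, (a ≠ 0 ∧ ∃ u, a = u ^ 2) ∧ (b ≠ 0 ∧ ∃ v, b = v ^ 2) ∧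
      (a + b ≠ 0 ∧ ∃ w, a + b = w ^ 2)) ∧
    (∃ a b : F, (a ≠ 0 ∧ ∃ u, a = u ^ 2) ∧ (b ≠ 0 ∧ ∃ v, b = v ^ 2) ∧
      (a + b ≠ 0 ∧ ¬∃ w, a + b = w ^ 2)) := by
  have sum_eq {c : F} (hc : c ≠ 0) : ∃ a b : F,
      (a ≠ 0 ∧ ∃ u, a = u ^ 2) ∧ (b ≠ 0 ∧ ∃ v, b = v ^ 2) ∧ a + b = c := by
    obtain ⟨x, y, hx, hy, hxy⟩ := exists_ne_zero_sq_add_sq_eq hF hc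
    exact ⟨x ^ 2, y ^ 2, ⟨pow_ne_zero 2 hx, x, rfl⟩, ⟨pow_ne_zero 2 hy, y, rfl⟩, hxy⟩
  constructor
  · obtain ⟨a, b, ha, hb, hab⟩ := sum_eq one_ne_zero
    exact ⟨a, b, ha, hb, hab ▸ one_ne_zero, 1, by rw [hab, one_pow]⟩
  · obtain ⟨c, hc⟩ := FiniteField.exists_nonsquare hF_char
    have hc_zero : c ≠ 0 := by
      rintro rfl
      exact hc .zero
    obtain ⟨a, b, ha, hb, rfl⟩ := sum_eq hc_zero
    exact ⟨a, b, ha, hb, hc_zero, mt (isSquare_iff_exists_sq _).mpr hc⟩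

end FiniteField

/-- For a prime `p ≥ 7` with `p ≡ 3 (mod 4)`: (i) some sum of two nonzero squares in
`ZMod p` is a nonzero square, and (ii) some sum of two nonzero squares is nonzero and not
a square. (In `W = F_p/(F_p^×)²` this realizes `[1] ⊞ [1] = {[1], [−1]}`.) -/
theorem sum_of_nonzero_squares_both_classes (p : ℕ) [Fact p.Prime]
    (hp7 : 7 ≤ p) (hp : p % 4 = 3) :
    (∃ a b : ZMod p, (a ≠ 0 ∧ ∃ u, a = u ^ 2) ∧ (b ≠ 0 ∧ ∃ v, b = v ^ 2) ∧
      (a + b ≠ 0 ∧ ∃ w, a + b = w ^ 2)) ∧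
    (∃ a b : ZMod p, (a ≠ 0 ∧ ∃ u, a = u ^ 2) ∧ (b ≠ 0 ∧ ∃ v, b = v ^ 2) ∧
      (a + b ≠ 0 ∧ ¬∃ w, a + b = w ^ 2)) := by
  exact sum_of_nonzero_squares_both_classes_general
    (by rw [ZMod.ringChar_zmod_n]; lia) (by rw [Nat.card_zmod]; lia)
end

section
/- Let p be a prime with p ≥ 7 and p ≡ 3 (mod 4). Then: (i) there exist a nonzero square s ∈ ZMod p and a nonzero non-square n ∈ ZMod p with s + n = 0; (ii) there exist a nonzero square s and a nonzero non-square n with s + n a nonzero square; and (iii) there exist a nonzero square s and a nonzero non-square n with s + n nonzero and not a square. (In the quotient hyperfield W = F_p/(F_p^×)², this says [1] ⊞ [−1] = {[0], [1], [−1]}.) -/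
/-!
If `-1` is not a square in a field, then negation turns nonzero squares into nonzero non-squares.
A Pythagorean triple `x ^ 2 + y ^ 2 = z ^ 2` with nonzero entries can therefore be read both as
`z ^ 2 + -y ^ 2 = x ^ 2` and as `x ^ 2 + -z ^ 2 = -y ^ 2`: a nonzero square plus a nonzero
non-square is a nonzero square in the first case, and a nonzero non-square in the second. The
classical parametrization `(1 - t ^ 2, 2 * t, 1 + t ^ 2)` provides such a triple as soon as the
field has an element `t` other than `0`, `1` and `-1`.
-/

theorem not_isSquare_neg_of_isSquare {K : Type*} [CommGroupWithZero K] [HasDistribNeg K]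
    (h : ¬IsSquare (-1 : K)) {a : K} (ha₀ : a ≠ 0) (ha : IsSquare a) : ¬IsSquare (-a) :=
  fun hneg => h (by simpa only [neg_div, div_self ha₀] using hneg.div ha)

theorem exists_ne_zero_sq_add_sq_eq_sq {R : Type*} [CommRing R] [NoZeroDivisors R]
    (h : ¬IsSquare (-1 : R)) (hR : 3 < Cardinal.mk R) :
    ∃ x y z : R, x ≠ 0 ∧ y ≠ 0 ∧ z ≠ 0 ∧ x ^ 2 + y ^ 2 = z ^ 2 := by
  obtain ⟨t, ht⟩ := Cardinal.exists_notMem_of_length_lt [(0 : R), 1, -1] (by simpa using hR)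
  obtain ⟨ht_zero, ht_one, ht_neg_one⟩ : t ≠ 0 ∧ t ≠ 1 ∧ t ≠ -1 := by simpa using ht
  have h_two : (2 : R) ≠ 0 := fun h_two => h ⟨1, by linear_combination -h_two⟩
  have hx : 1 - t ^ 2 ≠ 0 :=
    sub_ne_zero.mpr (sq_ne_one_iff.mpr ⟨ht_one, ht_neg_one⟩).symm
  have hz : 1 + t ^ 2 ≠ 0 := fun hz => h ⟨t, by linear_combination -hz⟩
  exact ⟨1 - t ^ 2, 2 * t, 1 + t ^ 2, hx, mul_ne_zero h_two ht_zero, hz, by ring⟩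

theorem sum_square_nonsquare_all_classes_general {K : Type*} [Field K]
    (h : ¬IsSquare (-1 : K)) (hK : 3 < Cardinal.mk K) :
    (∃ s n : K, (s ≠ 0 ∧ IsSquare s) ∧ (n ≠ 0 ∧ ¬IsSquare n) ∧ s + n = 0) ∧
    (∃ s n : K, (s ≠ 0 ∧ IsSquare s) ∧ (n ≠ 0 ∧ ¬IsSquare n) ∧
      (s + n ≠ 0 ∧ IsSquare (s + n))) ∧
    (∃ s n : K, (s ≠ 0 ∧ IsSquare s) ∧ (n ≠ 0 ∧ ¬IsSquare n) ∧
      (s + n ≠ 0 ∧ ¬IsSquare (s + n))) := by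
  have sq_class {a : K} (ha : a ≠ 0) : a ^ 2 ≠ 0 ∧ IsSquare (a ^ 2) :=
    ⟨pow_ne_zero 2 ha, IsSquare.sq a⟩
  have neg_sq_class {a : K} (ha : a ≠ 0) : -a ^ 2 ≠ 0 ∧ ¬IsSquare (-a ^ 2) :=
    ⟨neg_ne_zero.mpr (sq_class ha).1,
      not_isSquare_neg_of_isSquare h (sq_class ha).1 (sq_class ha).2⟩
  obtain ⟨x, y, z, hx, hy, hz, hxyz⟩ := exists_ne_zero_sq_add_sq_eq_sq h hK
  have sum_eq_sq : z ^ 2 + -y ^ 2 = x ^ 2 := by linear_combination -hxyz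
  have sum_eq_neg_sq : x ^ 2 + -z ^ 2 = -y ^ 2 := by linear_combination hxyz
  exact ⟨⟨z ^ 2, -z ^ 2, sq_class hz, neg_sq_class hz, add_neg_cancel _⟩,
    ⟨z ^ 2, -y ^ 2, sq_class hz, neg_sq_class hy, sum_eq_sq ▸ sq_class hx⟩,
    ⟨x ^ 2, -z ^ 2, sq_class hx, neg_sq_class hz, sum_eq_neg_sq ▸ neg_sq_class hy⟩⟩

/-- For a prime `p ≥ 7` with `p ≡ 3 (mod 4)`: (i) some nonzero square plus nonzero
non-square is `0`; (ii) some such sum is a nonzero square; (iii) some such sum is nonzero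
and not a square. (In `W = F_p/(F_p^×)²` this says `[1] ⊞ [−1] = {[0], [1], [−1]}`.) -/
theorem sum_square_nonsquare_all_classes (p : ℕ) [Fact p.Prime]
    (hp7 : 7 ≤ p) (hp : p % 4 = 3) :
    (∃ s n : ZMod p, (s ≠ 0 ∧ ∃ u, s = u ^ 2) ∧ (n ≠ 0 ∧ ¬∃ u, n = u ^ 2) ∧
      s + n = 0) ∧
    (∃ s n : ZMod p, (s ≠ 0 ∧ ∃ u, s = u ^ 2) ∧ (n ≠ 0 ∧ ¬∃ u, n = u ^ 2) ∧
      (s + n ≠ 0 ∧ ∃ w, s + n = w ^ 2)) ∧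
    (∃ s n : ZMod p, (s ≠ 0 ∧ ∃ u, s = u ^ 2) ∧ (n ≠ 0 ∧ ¬∃ u, n = u ^ 2) ∧
      (s + n ≠ 0 ∧ ¬∃ w, s + n = w ^ 2)) := by
  have h_neg_one : ¬IsSquare (-1 : ZMod p) := fun h => ZMod.exists_sq_eq_neg_one_iff.mp h hp
  have h_card : 3 < Cardinal.mk (ZMod p) := by
    rw [Cardinal.mk_fintype, ZMod.card]
    exact_mod_cast (show 3 < p by omega)
  simpa only [isSquare_iff_exists_sq] using
    sum_square_nonsquare_all_classes_general h_neg_one h_card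
end

section
/- Let K be the finite field with 49 elements (GaloisField 7 2), let ι ∈ K satisfy ι² = −1, and let G = {1, 2, 4} ⊆ K. Then: (i) the pointwise set-sum {ι·g₁ + (ι+1)·g₂ : g₁, g₂ ∈ G} equals the union of cosets (ι+4)·G ∪ (−ι+4)·G ∪ (−ι+2)·G; and (ii) every element z of this set satisfies z⁸ ∉ {1, 2, 4}. (In the quotient hyperfield L = F_49/(F_7^×)², this says [ι] ⊞ [ι+1] = {[ι−3], [−ι−3], [−ι+2]}, and none of these classes has order at most 8 in L^×; this is the key step showing that L has no proper subhyperfield containing [1], [−1], [ι], hence that L is a minimal extension of the weak hyperfield W containing a root of 1 ⊞ T².) -/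
instance : Fact (Nat.Prime 7) := ⟨by norm_num⟩

/-! Let `S` be the group of squares of `F_7^×`, acting by scalars, so that the `G`-cosets are the
`S`-orbits. Scaling by `S` reduces the hypersum of two orbits to the sums `x + g • y` of a fixed
representative with a moving one; here these are `2ι + 1 = 2(ι + 4)`, `3ι + 2 = 4(-ι + 4)` and
`5ι + 4 = 2(-ι + 2)`. For the orders, the Frobenius sends `ι` to `-ι`, so the eighth power of
`a + bι` is its norm `a² + b²`, which for the three representatives is `3`, `3` and `5`: none of
them is a square modulo `7`. -/

open MulAction
open scoped Pointwise

theorem ofNat_smul_eq_mul_ofNat {k A : Type*} [CommSemiring k] [Semiring A] [Algebra k A]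
    (n : ℕ) [n.AtLeastTwo] (x : A) : (ofNat(n) : k) • x = x * ofNat(n) := by
  rw [Algebra.smul_def, Algebra.commutes, map_ofNat]

theorem orbit_add_orbit {G A : Type*} [Group G] [AddMonoid A] [DistribMulAction G A] (x y : A) :
    orbit G x + orbit G y = ⋃ g : G, orbit G (x + g • y) := by
  ext z
  simp only [Set.mem_add, Set.mem_iUnion, mem_orbit_iff, exists_exists_eq_and]
  constructor
  · rintro ⟨g, h, rfl⟩
    exact ⟨g⁻¹ * h, g, by rw [smul_add, smul_smul, mul_inv_cancel_left]⟩
  · rintro ⟨h, g, rfl⟩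
    exact ⟨g, g * h, by rw [smul_add, smul_smul]⟩

theorem pow_mem_orbit_one_iff_of_mem_orbit {G M : Type*} [Group G] [Monoid M] [MulAction G M]
    [IsScalarTower G M M] [SMulCommClass G M M] {x y : M} (h : x ∈ orbit G y) (n : ℕ) :
    x ^ n ∈ orbit G (1 : M) ↔ y ^ n ∈ orbit G (1 : M) := by
  obtain ⟨g, rfl⟩ := h
  simp only [smul_pow, ← orbit_eq_iff, orbit_smul]

theorem smul_one_mem_orbit_one_iff {k A : Type*} [Monoid k] [MulOneClass A] [MulAction k A]
    [FaithfulSMul k A] [IsScalarTower k A A] (H : Subgroup kˣ) {c : k} :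
    c • (1 : A) ∈ orbit H (1 : A) ↔ c ∈ Set.range fun u : H ↦ ((u : kˣ) : k) := by
  simp only [mem_orbit_iff, Set.mem_range, Subgroup.smul_def, Units.smul_def,
    (faithfulSMul_iff_injective_smul_one k A).1 inferInstance |>.eq_iff]

theorem pow_eq_neg_of_sq_eq_neg_one {M : Type*} [Monoid M] [HasDistribNeg M] {x : M}
    (hx : x ^ 2 = -1) {n : ℕ} (hn : n % 4 = 3) : x ^ n = -x := by
  obtain ⟨k, rfl⟩ : ∃ k, n = 2 * (2 * k + 1) + 1 := ⟨n / 4, by lia⟩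
  rw [pow_succ, pow_mul, hx, Odd.neg_one_pow ⟨k, rfl⟩, neg_one_mul]

theorem smul_one_add_smul_pow_succ {p : ℕ} [Fact p.Prime] (hp : p % 4 = 3) {R : Type*} [Ring R]
    [Algebra (ZMod p) R] {ι : R} (hι : ι ^ 2 = -1) (a b : ZMod p) :
    (a • (1 : R) + b • ι) ^ (p + 1) = (a ^ 2 + b ^ 2) • (1 : R) := by
  nontriviality R
  have : CharP R p := charP_of_injective_algebraMap (algebraMap (ZMod p) R).injective p
  have frobenius : (a • (1 : R) + b • ι) ^ p = a • (1 : R) - b • ι := by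
    have comm : Commute (a • (1 : R)) (b • ι) := ((Commute.one_left ι).smul_left a).smul_right b
    rw [add_pow_char_of_commute p comm, smul_pow, smul_pow, ZMod.pow_card, ZMod.pow_card, one_pow,
      pow_eq_neg_of_sq_eq_neg_one hι hp, smul_neg, sub_eq_add_neg]
  calc (a • (1 : R) + b • ι) ^ (p + 1)
      = (a • (1 : R) - b • ι) * (a • (1 : R) + b • ι) := by rw [pow_succ, frobenius]
    _ = a ^ 2 • (1 : R) - b ^ 2 • ι ^ 2 := by
      simp only [sub_mul, mul_add, smul_mul_smul_comm, one_mul, mul_one, mul_comm b a, pow_two]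
      abel
    _ = (a ^ 2 + b ^ 2) • (1 : R) := by rw [hι, smul_neg, sub_neg_eq_add, add_smul]

section SquaresModSeven

/-- The group of squares of `F_7^×`. It acts by scalars on every `F_7`-algebra, and its orbits are
the cosets `x·G`, the classes of the quotient hyperfield. -/
abbrev squaresModSeven : Subgroup (ZMod 7)ˣ := Subgroup.square (ZMod 7)ˣ

theorem range_coe_squaresModSeven :
    Set.range (fun u : squaresModSeven ↦ ((u : (ZMod 7)ˣ) : ZMod 7)) = {1, 2, 4} := by
  have h : ∀ c : ZMod 7, (∃ u : (ZMod 7)ˣ, IsSquare u ∧ (u : ZMod 7) = c) ↔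
      c = 1 ∨ c = 2 ∨ c = 4 := by
    decide
  ext c
  simpa using h c

section Module

variable {M : Type*} [AddCommGroup M] [Module (ZMod 7) M]

theorem orbit_squaresModSeven (x : M) :
    orbit squaresModSeven x = {x, (2 : ZMod 7) • x, (4 : ZMod 7) • x} := by
  calc orbit squaresModSeven x
      = (fun c : ZMod 7 ↦ c • x) '' Set.range fun u : squaresModSeven ↦
          ((u : (ZMod 7)ˣ) : ZMod 7) := Set.range_comp (fun c : ZMod 7 ↦ c • x) _
    _ = {x, (2 : ZMod 7) • x, (4 : ZMod 7) • x} := by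
      simp only [range_coe_squaresModSeven, Set.image_insert_eq, Set.image_singleton, one_smul]

theorem orbit_squaresModSeven_smul {c : ZMod 7} (hc : c ∈ ({1, 2, 4} : Set (ZMod 7))) (x : M) :
    orbit squaresModSeven (c • x) = orbit squaresModSeven x := by
  rw [← range_coe_squaresModSeven] at hc
  obtain ⟨u, rfl⟩ := hc
  exact orbit_smul u x

theorem orbit_squaresModSeven_add_orbit (x y : M) :
    orbit squaresModSeven x + orbit squaresModSeven y =
      orbit squaresModSeven (x + y) ∪ orbit squaresModSeven (x + (2 : ZMod 7) • y) ∪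
      orbit squaresModSeven (x + (4 : ZMod 7) • y) := by
  calc orbit squaresModSeven x + orbit squaresModSeven y
      = ⋃ u : squaresModSeven, orbit squaresModSeven (x + u • y) := orbit_add_orbit x y
    _ = ⋃ c ∈ Set.range fun u : squaresModSeven ↦ ((u : (ZMod 7)ˣ) : ZMod 7),
          orbit squaresModSeven (x + c • y) := by
      rw [Set.biUnion_range]
      rfl
    _ = _ := by
      simp only [range_coe_squaresModSeven, Set.biUnion_insert, Set.biUnion_singleton, one_smul,
        Set.union_assoc]

theorem orbit_squaresModSeven_add_orbit_add (x y : M) :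
    orbit squaresModSeven x + orbit squaresModSeven (x + y) =
      orbit squaresModSeven (x + (4 : ZMod 7) • y) ∪
      orbit squaresModSeven (-x + (4 : ZMod 7) • y) ∪
      orbit squaresModSeven (-x + (2 : ZMod 7) • y) := by
  have h₁ : x + (x + y) = (2 : ZMod 7) • (x + (4 : ZMod 7) • y) := by
    match_scalars <;> decide
  have h₂ : x + (2 : ZMod 7) • (x + y) = (4 : ZMod 7) • (-x + (4 : ZMod 7) • y) := by
    match_scalars <;> decide
  have h₄ : x + (4 : ZMod 7) • (x + y) = (2 : ZMod 7) • (-x + (2 : ZMod 7) • y) := by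
    match_scalars <;> decide
  rw [orbit_squaresModSeven_add_orbit, h₁, h₂, h₄]
  simp only [orbit_squaresModSeven_smul, Set.mem_insert_iff, Set.mem_singleton_iff, true_or,
    or_true]

end Module

section Algebra

variable {R : Type*} [Ring R] [Algebra (ZMod 7) R]

theorem setOf_eq_mul_eq_orbit_squaresModSeven (x : R) :
    {z | ∃ g ∈ ({1, 2, 4} : Set R), z = x * g} = orbit squaresModSeven x := by
  ext z
  simp only [orbit_squaresModSeven, ofNat_smul_eq_mul_ofNat, Set.mem_ofPred_eq, Set.mem_insert_iff,
    Set.mem_singleton_iff, exists_eq_or_imp, exists_eq_left, mul_one]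

theorem setOf_eq_mul_add_mul_eq_orbit_add_orbit_squaresModSeven (x y : R) :
    {z | ∃ g₁ ∈ ({1, 2, 4} : Set R), ∃ g₂ ∈ ({1, 2, 4} : Set R), z = x * g₁ + y * g₂} =
      orbit squaresModSeven x + orbit squaresModSeven y := by
  simp only [← setOf_eq_mul_eq_orbit_squaresModSeven]
  ext z
  simp [Set.mem_add, eq_comm]

theorem orbit_squaresModSeven_one : orbit squaresModSeven (1 : R) = {1, 2, 4} := by
  simp only [orbit_squaresModSeven, ofNat_smul_eq_mul_ofNat, one_mul]

theorem pow_eight_notMem_orbit_squaresModSeven_one [Nontrivial R] {ι : R}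
    (hι : ι ^ 2 = -1) {a b : ZMod 7} (hab : a ^ 2 + b ^ 2 ∉ ({1, 2, 4} : Set (ZMod 7))) {z : R}
    (hz : z ∈ orbit squaresModSeven (b • ι + a • (1 : R))) :
    z ^ 8 ∉ orbit squaresModSeven (1 : R) := by
  rwa [pow_mem_orbit_one_iff_of_mem_orbit hz, add_comm, smul_one_add_smul_pow_succ (p := 7) rfl hι,
    smul_one_mem_orbit_one_iff, range_coe_squaresModSeven]

end Algebra

end SquaresModSeven

theorem hypersum_iota_iotaPlusOne_general {R : Type*} [Ring R] [Nontrivial R] [Algebra (ZMod 7) R]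
    (ι : R) (hι : ι ^ 2 = -1) :
    ({z : R | ∃ g₁ ∈ ({1, 2, 4} : Set R),
        ∃ g₂ ∈ ({1, 2, 4} : Set R), z = ι * g₁ + (ι + 1) * g₂} =
      {z : R | ∃ g ∈ ({1, 2, 4} : Set R), z = (ι + 4) * g} ∪
      {z : R | ∃ g ∈ ({1, 2, 4} : Set R), z = (-ι + 4) * g} ∪
      {z : R | ∃ g ∈ ({1, 2, 4} : Set R), z = (-ι + 2) * g}) ∧
    (∀ z ∈ {z : R | ∃ g₁ ∈ ({1, 2, 4} : Set R),
        ∃ g₂ ∈ ({1, 2, 4} : Set R), z = ι * g₁ + (ι + 1) * g₂},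
      z ^ 8 ∉ ({1, 2, 4} : Set R)) := by
  have hsum := orbit_squaresModSeven_add_orbit_add ι (1 : R)
  simp only [setOf_eq_mul_eq_orbit_squaresModSeven,
    setOf_eq_mul_add_mul_eq_orbit_add_orbit_squaresModSeven]
  rw [← orbit_squaresModSeven_one]
  simp only [ofNat_smul_eq_mul_ofNat, one_mul] at hsum
  refine ⟨hsum, fun z hz ↦ ?_⟩
  rw [orbit_squaresModSeven_add_orbit_add] at hz
  rcases hz with (hz | hz) | hz
  · exact pow_eight_notMem_orbit_squaresModSeven_one hι (a := 4) (b := 1) (by decide)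
      (by rwa [one_smul])
  · exact pow_eight_notMem_orbit_squaresModSeven_one hι (a := 4) (b := -1) (by decide)
      (by rwa [neg_one_smul])
  · exact pow_eight_notMem_orbit_squaresModSeven_one hι (a := 2) (b := -1) (by decide)
      (by rwa [neg_one_smul])

/-- In `K = GF(49)` with `ι² = −1` and `G = {1, 2, 4}`: (i) the set-sum
`{ι·g₁ + (ι+1)·g₂ : g₁, g₂ ∈ G}` is the union of the cosets
`(ι+4)·G ∪ (−ι+4)·G ∪ (−ι+2)·G`; and (ii) every element `z` of this set satisfies
`z⁸ ∉ {1, 2, 4}`. (In `L = F_49/(F_7^×)²`: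
`[ι] ⊞ [ι+1] = {[ι−3], [−ι−3], [−ι+2]}`, none of which has order at most `8` in `L^×`.) -/
theorem hypersum_iota_iotaPlusOne (ι : GaloisField 7 2) (hι : ι ^ 2 = -1) :
    ({z : GaloisField 7 2 | ∃ g₁ ∈ ({1, 2, 4} : Set (GaloisField 7 2)),
        ∃ g₂ ∈ ({1, 2, 4} : Set (GaloisField 7 2)), z = ι * g₁ + (ι + 1) * g₂} =
      {z : GaloisField 7 2 | ∃ g ∈ ({1, 2, 4} : Set (GaloisField 7 2)), z = (ι + 4) * g} ∪
      {z : GaloisField 7 2 | ∃ g ∈ ({1, 2, 4} : Set (GaloisField 7 2)), z = (-ι + 4) * g} ∪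
      {z : GaloisField 7 2 | ∃ g ∈ ({1, 2, 4} : Set (GaloisField 7 2)), z = (-ι + 2) * g}) ∧
    (∀ z ∈ {z : GaloisField 7 2 | ∃ g₁ ∈ ({1, 2, 4} : Set (GaloisField 7 2)),
        ∃ g₂ ∈ ({1, 2, 4} : Set (GaloisField 7 2)), z = ι * g₁ + (ι + 1) * g₂},
      z ^ 8 ∉ ({1, 2, 4} : Set (GaloisField 7 2))) :=
  hypersum_iota_iotaPlusOne_general ι hι
end

section
/- Let K = GaloisField 7 2 with H the subgroup of K^× of units with value in {1, 2, 4}, and let K' = GaloisField 11 2 with H' the subgroup of K'^× of units with value in {1, 3, 4, 5, 9}. Then there is no injective group homomorphism from K^×/H into K'^×/H'. (Since K^×/H has order 16 and K'^×/H' has order 24 and 16 ∤ 24, Lagrange's theorem forbids such an embedding. This is the group-theoretic core of the theorem that the quotient hyperfield F_49/(F_7^×)² is not a subhyperfield — weak or strong — of F_121/(F_11^×)², so the two strong extensions of the weak hyperfield W = F_p/(F_p^×)² containing a root of 1 ⊞ T², built from the quotient structures at p = 7 and p = 11, yield non-isomorphic minimal extensions.) -/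
instance : Fact (Nat.Prime 11) := ⟨by norm_num⟩

/-! A subgroup `H` of odd order leaves the full 2-part of `|K^×| = 48` in the quotient, so 16
divides `|K^×/H|`; but `|K'^×/H'|` divides `|K'^×| = 120`, which 16 does not divide. In `F_7` the
set `{1, 2, 4}` consists of the cube roots of unity, so a subgroup with values in it has odd
order. -/

lemma not_injective_of_dvd_card_of_coprime {G G' : Type*} [Group G] [Group G']
    {H : Subgroup G} [H.Normal] {H' : Subgroup G'} [H'.Normal] {n : ℕ}
    (hG : n ∣ Nat.card G) (hH : n.Coprime (Nat.card H)) (hG' : ¬n ∣ Nat.card G')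
    (φ : G ⧸ H →* G' ⧸ H') : ¬Function.Injective φ := by
  intro hφ
  have hquot : n ∣ Nat.card (G ⧸ H) :=
    hH.dvd_of_dvd_mul_right (H.card_eq_card_quotient_mul_card_subgroup ▸ hG)
  exact hG' <| hquot.trans <|
    (Subgroup.card_dvd_of_injective φ hφ).trans H'.card_quotient_dvd_card

lemma odd_card_of_forall_pow_eq_one {G : Type*} [Group G] [Finite G] {n : ℕ}
    (hn : Odd n) (h : ∀ g : G, g ^ n = 1) : Odd (Nat.card G) := by
  by_contra hcard
  obtain ⟨g, hg⟩ := exists_prime_orderOf_dvd_card' (G := G) 2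
    (Nat.not_odd_iff_even.mp hcard).two_dvd
  exact hn.not_two_dvd_nat (hg ▸ orderOf_dvd_of_pow_eq_one (h g))

lemma pow_three_eq_one_of_mem_one_two_four {R : Type*} [CommRing R] [CharP R 7] {x : R}
    (hx : x ∈ ({1, 2, 4} : Set R)) : x ^ 3 = 1 := by
  have h7 : (7 : R) = 0 := by exact_mod_cast CharP.cast_eq_zero R 7
  rcases hx with rfl | rfl | rfl
  · exact one_pow 3
  · linear_combination h7
  · linear_combination 9 * h7

lemma odd_card_of_forall_mem_one_two_four {R : Type*} [CommRing R] [CharP R 7]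
    (H : Subgroup Rˣ) (hH : ∀ u ∈ H, (u : R) ∈ ({1, 2, 4} : Set R)) :
    Odd (Nat.card H) := by
  have hfin : (H : Set Rˣ).Finite :=
    .of_finite_image ((Set.toFinite {1, 2, 4}).subset (Set.image_subset_iff.mpr hH))
      Units.val_injective.injOn
  have : Finite H := hfin.to_subtype
  exact odd_card_of_forall_pow_eq_one (n := 3) (by decide) fun u ↦
    Subtype.ext <| Units.ext <| pow_three_eq_one_of_mem_one_two_four (hH u u.2)

lemma card_units_galoisField (p : ℕ) [Fact p.Prime] {n : ℕ} (hn : n ≠ 0) :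
    Nat.card (GaloisField p n)ˣ = p ^ n - 1 := by
  rw [Nat.card_units, GaloisField.card p n hn]

theorem no_embedding_of_quotient_groups_general
    (H : Subgroup (GaloisField 7 2)ˣ) (hH : Odd (Nat.card H))
    (H' : Subgroup (GaloisField 11 2)ˣ) :
    ¬∃ φ : ((GaloisField 7 2)ˣ ⧸ H) →* ((GaloisField 11 2)ˣ ⧸ H'),
      Function.Injective φ := by
  have hK : 16 ∣ Nat.card (GaloisField 7 2)ˣ := by
    rw [card_units_galoisField 7 two_ne_zero]; norm_num
  have hK' : ¬16 ∣ Nat.card (GaloisField 11 2)ˣ := by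
    rw [card_units_galoisField 11 two_ne_zero]; norm_num
  have hcop : Nat.Coprime 16 (Nat.card H) := hH.coprime_two_left.pow_left 4
  rintro ⟨φ, hφ⟩
  exact not_injective_of_dvd_card_of_coprime hK hcop hK' φ hφ

/-- Let `K = GF(49)` with `H ≤ K^×` the subgroup of units with value in `{1, 2, 4}`, and
`K' = GF(121)` with `H' ≤ K'^×` the subgroup of units with value in `{1, 3, 4, 5, 9}`.
Then there is no injective group homomorphism `K^×/H → K'^×/H'`. (Hence
`F_49/(F_7^×)²` is not a subhyperfield — weak or strong — of `F_121/(F_11^×)²`.) -/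
theorem no_embedding_of_quotient_groups
    (H : Subgroup (GaloisField 7 2)ˣ)
    (hH : ∀ u : (GaloisField 7 2)ˣ,
      u ∈ H ↔ (u : GaloisField 7 2) ∈ ({1, 2, 4} : Set (GaloisField 7 2)))
    (H' : Subgroup (GaloisField 11 2)ˣ)
    (hH' : ∀ u : (GaloisField 11 2)ˣ,
      u ∈ H' ↔ (u : GaloisField 11 2) ∈ ({1, 3, 4, 5, 9} : Set (GaloisField 11 2))) :
    ¬∃ φ : ((GaloisField 7 2)ˣ ⧸ H) →* ((GaloisField 11 2)ˣ ⧸ H'),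
      Function.Injective φ :=
  no_embedding_of_quotient_groups_general H
    (odd_card_of_forall_mem_one_two_four H fun u ↦ (hH u).1) H'
end
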